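/- Let R = ⊕_{i≥0} R_i be a standard graded algebra over a field K (i.e., a commutative graded K-algebra with R_0 = K that is generated by R_1 as a K-algebra, with each R_i finite-dimensional over K), and let d_i = dim_K R_i be its Hilbert function. Then d_0 = 1 and d_{i+1} ≤ d_i^⟨i⟩ for all i ≥ 1. -/

import Mathlib

/-- `macaulay h a` is the Macaulay operator `a ↦ a^⟨h⟩`, computed via the greedy
construction of the `h`-binomial representation of `a`: writing
`a = C(a_h,h) + C(a_{h-1},h-1) + ⋯ + C(a_1,1)` with `a_h > a_{h-1} > ⋯ > a_1 ≥ 0`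
(where `a_h` is the largest integer with `C(a_h,h) ≤ a`, and so on), one sets
`a^⟨h⟩ = C(a_h+1,h+1) + C(a_{h-1}+1,h) + ⋯ + C(a_1+1,2)`, and `0^⟨h⟩ = 0`. -/
def macaulay : ℕ → ℕ → ℕ
  | 0, _ => 0
  | h + 1, a =>
    if a = 0 then 0
    else
      let m := Nat.findGreatest (fun k => Nat.choose k (h + 1) ≤ a) (a + h + 1)
      Nat.choose (m + 1) (h + 2) + macaulay h (a - Nat.choose m (h + 1))

section Shadow

variable {α : Type*} [DecidableEq α]

/-- The multisets obtained by erasing one element from a member of `F`. -/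
def multisetShadow (F : Finset (Multiset α)) : Finset (Multiset α) :=
  F.biUnion fun m => m.toFinset.image m.erase

lemma mem_multisetShadow {F : Finset (Multiset α)} {n : Multiset α} :
    n ∈ multisetShadow F ↔ ∃ z, z ::ₘ n ∈ F := by
  simp only [multisetShadow, Finset.mem_biUnion, Finset.mem_image, Multiset.mem_toFinset]
  constructor
  · rintro ⟨m, hm, z, hz, rfl⟩
    exact ⟨z, by rwa [Multiset.cons_erase hz]⟩
  · rintro ⟨z, hz⟩
    exact ⟨_, hz, z, Multiset.mem_cons_self _ _, Multiset.erase_cons_head _ _⟩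

/-- Replacing any element of a member of `F` by `x` gives a member of `F`. -/
def IsShifted (x : α) (F : Finset (Multiset α)) : Prop :=
  ∀ y m, y ::ₘ m ∈ F → x ::ₘ m ∈ F

/-- Replace every occurrence of `y` by `x`. -/
def substMultiset (x y : α) (m : Multiset α) : Multiset α :=
  m.map fun z => if z = y then x else z

lemma count_substMultiset {x y : α} (hxy : x ≠ y) (z : α) (m : Multiset α) :
    (substMultiset x y m).count z =
      if z = y then 0 else if z = x then m.count x + m.count y else m.count z := by
  induction m using Multiset.induction_on with
  | empty => simp [substMultiset]
  | cons w m ih =>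
    simp only [substMultiset, Multiset.map_cons, Multiset.count_cons] at ih ⊢
    rw [ih]
    split_ifs <;> grind

lemma substMultiset_cons (x y z : α) (m : Multiset α) :
    substMultiset x y (z ::ₘ m) = (if z = y then x else z) ::ₘ substMultiset x y m := by
  simp [substMultiset]

lemma card_substMultiset (x y : α) (m : Multiset α) :
    (substMultiset x y m).card = m.card := by
  simp [substMultiset]

lemma eq_of_substMultiset_eq {x y : α} (hxy : x ≠ y) {m n : Multiset α}
    (h : substMultiset x y m = substMultiset x y n) (hc : m.count y = n.count y) : m = n := by
  ext z
  have h1 := congrArg (Multiset.count z) h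
  rw [count_substMultiset hxy, count_substMultiset hxy] at h1
  split_ifs at h1 <;> grind

lemma exists_substMultiset_eq {x y : α} (hxy : x ≠ y) (u : Multiset α) {e : ℕ}
    (he : e ≤ (substMultiset x y u).count x) :
    ∃ m, substMultiset x y m = substMultiset x y u ∧ m.count y = e := by
  refine ⟨Multiset.replicate e y +
    (substMultiset x y u - Multiset.replicate e x), ?_, ?_⟩
  · ext z
    rw [count_substMultiset hxy]
    simp only [Multiset.count_add, Multiset.count_sub, Multiset.count_replicate,
      count_substMultiset hxy] at he ⊢
    split_ifs <;> grind
  · simp [Multiset.count_replicate, count_substMultiset hxy]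

lemma count_le_count_substMultiset {x y : α} (hxy : x ≠ y) (m : Multiset α) :
    m.count y ≤ (substMultiset x y m).count x := by
  rw [count_substMultiset hxy]; simp [hxy]

/-- The members of `F` agreeing with `u` up to exchanging `x` and `y`. -/
def substFiber (x y : α) (F : Finset (Multiset α)) (u : Multiset α) : Finset (Multiset α) :=
  F.filter fun m => substMultiset x y m = u

lemma injOn_count_substFiber {x y : α} (hxy : x ≠ y) (F : Finset (Multiset α))
    (u : Multiset α) : Set.InjOn (Multiset.count y) (substFiber x y F u) := by
  intro m hm n hn h
  simp only [substFiber, Finset.coe_filter, Set.mem_ofPred_eq] at hm hn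
  exact eq_of_substMultiset_eq hxy (hm.2.trans hn.2.symm) h

lemma card_substFiber_le {x y : α} (hxy : x ≠ y) (F : Finset (Multiset α)) (u : Multiset α) :
    (substFiber x y F u).card ≤ u.count x + 1 := by
  rw [← Finset.card_image_of_injOn (injOn_count_substFiber hxy F u),
    ← Finset.card_range (u.count x + 1)]
  refine Finset.card_le_card fun e he => ?_
  simp only [substFiber, Finset.mem_image, Finset.mem_filter] at he
  obtain ⟨m, ⟨-, rfl⟩, rfl⟩ := he
  exact Finset.mem_range.2 (Nat.lt_succ_of_le (count_le_count_substMultiset hxy m))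

lemma exists_compression {x y : α} (hxy : x ≠ y) (F : Finset (Multiset α)) :
    ∃ F' : Finset (Multiset α), ∀ m,
      m ∈ F' ↔ m.count y < (substFiber x y F (substMultiset x y m)).card := by
  refine ⟨(F.biUnion fun u => ((Finset.range (u.card + 1)).biUnion fun e =>
    {Multiset.replicate e y + (substMultiset x y u - Multiset.replicate e x)})).filter
      fun m => m.count y < (substFiber x y F (substMultiset x y m)).card, fun m => ?_⟩
  rw [Finset.mem_filter, and_iff_right_iff_imp]
  intro hm
  obtain ⟨u, hu⟩ := Finset.card_pos.1 (Nat.zero_lt_of_lt hm)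
  simp only [substFiber, Finset.mem_filter] at hu
  simp only [Finset.mem_biUnion, Finset.mem_range, Finset.mem_singleton]
  refine ⟨u, hu.1, m.count y, ?_, ?_⟩
  · have := congrArg Multiset.card hu.2
    rw [card_substMultiset, card_substMultiset] at this
    have := Multiset.count_le_card y m
    omega
  · ext z
    rw [hu.2]
    simp only [Multiset.count_add, Multiset.count_sub, Multiset.count_replicate,
      count_substMultiset hxy]
    split_ifs <;> grind

/-- Compression of `F` in the direction `y → x`: each fibre of `substMultiset x y` is replaced by
the equally many multisets in which `y` is least frequent. -/
noncomputable def compress {x y : α} (hxy : x ≠ y) (F : Finset (Multiset α)) :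
    Finset (Multiset α) := (exists_compression hxy F).choose

lemma mem_compress {x y : α} (hxy : x ≠ y) {F : Finset (Multiset α)} {m : Multiset α} :
    m ∈ compress hxy F ↔ m.count y < (substFiber x y F (substMultiset x y m)).card :=
  (exists_compression hxy F).choose_spec m

lemma image_count_substFiber_compress {x y : α} (hxy : x ≠ y) (F : Finset (Multiset α))
    (u : Multiset α) :
    (substFiber x y (compress hxy F) u).image (Multiset.count y) =
      Finset.range (substFiber x y F u).card := by
  ext e
  simp only [Finset.mem_image, Finset.mem_range]
  constructor
  · rintro ⟨m, hm, rfl⟩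
    simp only [substFiber, Finset.mem_filter, mem_compress] at hm
    obtain ⟨hm, rfl⟩ := hm
    exact hm
  · intro he
    obtain ⟨w, hw⟩ := Finset.card_pos.1 (Nat.zero_lt_of_lt he)
    have hw' := hw
    simp only [substFiber, Finset.mem_filter] at hw'
    obtain ⟨-, rfl⟩ := hw'
    obtain ⟨m, hm, rfl⟩ := exists_substMultiset_eq hxy w
      (Nat.le_of_lt_succ (he.trans_le (card_substFiber_le hxy F _)))
    refine ⟨m, ?_, rfl⟩
    rw [← hm] at he
    rw [substFiber, Finset.mem_filter, mem_compress]
    exact ⟨he, hm⟩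

lemma card_substFiber_compress {x y : α} (hxy : x ≠ y) (F : Finset (Multiset α))
    (u : Multiset α) :
    (substFiber x y (compress hxy F) u).card = (substFiber x y F u).card := by
  rw [← Finset.card_image_of_injOn (injOn_count_substFiber hxy _ u),
    image_count_substFiber_compress, Finset.card_range]

lemma exists_mem_of_mem_compress {x y : α} (hxy : x ≠ y) {F : Finset (Multiset α)}
    {m : Multiset α} (hm : m ∈ compress hxy F) :
    ∃ n ∈ F, substMultiset x y n = substMultiset x y m := by
  obtain ⟨n, hn⟩ := Finset.card_pos.1 (Nat.zero_lt_of_lt ((mem_compress hxy).1 hm))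
  exact ⟨n, by simpa [substFiber] using hn⟩

lemma sum_fiberwise_subst (x y : α) {M : Type*} [AddCommMonoid M] {F G : Finset (Multiset α)}
    (h : ∀ m ∈ G, ∃ n ∈ F, substMultiset x y n = substMultiset x y m) (g : Multiset α → M) :
    ∑ m ∈ G, g m = ∑ u ∈ F.image (substMultiset x y), ∑ m ∈ substFiber x y G u, g m :=
  (Finset.sum_fiberwise_of_maps_to (fun m hm => Finset.mem_image.2 (h m hm)) g).symm

lemma card_compress {x y : α} (hxy : x ≠ y) (F : Finset (Multiset α)) :
    (compress hxy F).card = F.card := by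
  rw [Finset.card_eq_sum_ones, Finset.card_eq_sum_ones,
    sum_fiberwise_subst x y (fun m hm => exists_mem_of_mem_compress hxy hm),
    sum_fiberwise_subst x y (F := F) (G := F) (fun m hm => ⟨m, hm, rfl⟩)]
  simp_rw [← Finset.card_eq_sum_ones, card_substFiber_compress]

lemma card_substFiber_cons_le {x y z : α} (hzx : z ≠ x) (hzy : z ≠ y)
    (F : Finset (Multiset α)) (u : Multiset α) :
    (substFiber x y F (z ::ₘ u)).card ≤ (substFiber x y (multisetShadow F) u).card := by
  have key : ∀ m ∈ substFiber x y F (z ::ₘ u), ∃ n, m = z ::ₘ n := by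
    intro m hm
    have hz : z ∈ substMultiset x y m := by
      rw [(Finset.mem_filter.1 hm).2]; exact Multiset.mem_cons_self _ _
    obtain ⟨w, hw, hwz⟩ := Multiset.mem_map.1 hz
    refine Multiset.exists_cons_of_mem ?_
    split_ifs at hwz with h
    · exact absurd hwz.symm hzx
    · exact hwz ▸ hw
  refine Finset.card_le_card_of_injOn (fun m => m.erase z) ?_ ?_
  · intro m hm
    obtain ⟨n, rfl⟩ := key m hm
    simp only [substFiber, Finset.coe_filter, Set.mem_ofPred_eq, substMultiset_cons, if_neg hzy,
      Multiset.cons_inj_right, Multiset.erase_cons_head] at hm ⊢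
    exact ⟨mem_multisetShadow.2 ⟨z, hm.1⟩, hm.2⟩
  · intro m hm n hn h
    obtain ⟨m, rfl⟩ := key m hm
    obtain ⟨n, rfl⟩ := key n hn
    simpa using h

lemma lt_card_substFiber_multisetShadow {x y : α} (hxy : x ≠ y)
    (F : Finset (Multiset α)) (u : Multiset α) {s : ℕ} (hs : s ≤ u.count x)
    (hF : s < (substFiber x y F (x ::ₘ u)).card) :
    s < (substFiber x y (multisetShadow F) u).card := by
  set A := substFiber x y F (x ::ₘ u) with hA
  have hinj : Set.InjOn (Multiset.count y) A := injOn_count_substFiber hxy F _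
  obtain ⟨e, he, hse⟩ : ∃ e ≤ u.count x + 1, s < (A.filter fun m => m.count y ≠ e).card := by
    by_cases h : ∃ e ≤ u.count x + 1, e ∉ A.image (Multiset.count y)
    · obtain ⟨e, he, heA⟩ := h
      refine ⟨e, he, ?_⟩
      rwa [Finset.filter_true_of_mem]
      exact fun m hm h => heA (Finset.mem_image.2 ⟨m, hm, h⟩)
    · push Not at h
      refine ⟨u.count x + 1, le_rfl, ?_⟩
      refine lt_of_le_of_lt hs (Nat.lt_of_succ_le ?_)
      refine le_trans ?_ (Finset.card_image_le (f := Multiset.count y))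
      rw [← Finset.card_range (u.count x).succ]
      refine Finset.card_le_card fun e he => ?_
      have he' := Finset.mem_range.1 he
      obtain ⟨m, hm, rfl⟩ := Finset.mem_image.1 (h e (by omega))
      exact Finset.mem_image.2 ⟨m, Finset.mem_filter.2 ⟨hm, by omega⟩, rfl⟩
  have key : ∀ m ∈ A, m.count x + m.count y = u.count x + 1 := by
    intro m hm
    have := congrArg (Multiset.count x) (Finset.mem_filter.1 hm).2
    rw [count_substMultiset hxy] at this
    simpa [hxy] using this
  refine hse.trans_le (Finset.card_le_card_of_injOn
    (fun m => if m.count y < e then m.erase x else m.erase y) ?_ ?_)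
  · intro m hm
    obtain ⟨hm, hme⟩ := Finset.mem_filter.1 hm
    have hk := key m hm
    obtain ⟨hmF, hmu⟩ := Finset.mem_filter.1 hm
    have aux : ∀ w, w = x ∨ w = y → w ∈ m →
        m.erase w ∈ substFiber x y (multisetShadow F) u := by
      intro w hw hwm
      obtain ⟨n, rfl⟩ := Multiset.exists_cons_of_mem hwm
      rw [Multiset.erase_cons_head]
      refine Finset.mem_filter.2 ⟨mem_multisetShadow.2 ⟨w, hmF⟩, ?_⟩
      rw [substMultiset_cons] at hmu
      have : (if w = y then x else w) = x := by
        rcases hw with rfl | rfl <;> simp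
      rwa [this, Multiset.cons_inj_right] at hmu
    simp only [Finset.mem_coe]
    split_ifs with h
    · exact aux x (Or.inl rfl) (Multiset.count_pos.1 (by omega))
    · exact aux y (Or.inr rfl) (Multiset.count_pos.1 (by omega))
  · intro m hm n hn h
    obtain ⟨hm, hme⟩ := Finset.mem_filter.1 hm
    obtain ⟨hn, hne⟩ := Finset.mem_filter.1 hn
    refine hinj hm hn ?_
    have h' := congrArg (Multiset.count y) h
    simp only at h'
    split_ifs at h' <;>
      simp only [Multiset.count_erase_self, Multiset.count_erase_of_ne hxy.symm] at h' <;> omega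

lemma multisetShadow_compress_subset {x y : α} (hxy : x ≠ y) (F : Finset (Multiset α)) :
    multisetShadow (compress hxy F) ⊆ compress hxy (multisetShadow F) := by
  intro n hn
  obtain ⟨z, hz⟩ := mem_multisetShadow.1 hn
  rw [mem_compress, substMultiset_cons] at hz
  rw [mem_compress]
  have hc : n.count y ≤ (z ::ₘ n).count y := Multiset.count_le_count_cons _ _ _
  by_cases h : z = x ∨ z = y
  · have : (if z = y then x else z) = x := by
      rcases h with rfl | rfl <;> simp
    rw [this] at hz
    exact lt_card_substFiber_multisetShadow hxy F _ (count_le_count_substMultiset hxy n)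
      (hc.trans_lt hz)
  · push Not at h
    rw [if_neg h.2] at hz
    exact (hc.trans_lt hz).trans_le (card_substFiber_cons_le h.1 h.2 F _)

lemma card_multisetShadow_compress_le {x y : α} (hxy : x ≠ y) (F : Finset (Multiset α)) :
    (multisetShadow (compress hxy F)).card ≤ (multisetShadow F).card :=
  (Finset.card_le_card (multisetShadow_compress_subset hxy F)).trans (card_compress hxy _).le

lemma sum_range_card_le_sum (E : Finset ℕ) :
    ∑ i ∈ Finset.range E.card, i ≤ ∑ i ∈ E, i ∧
      (∑ i ∈ Finset.range E.card, i = ∑ i ∈ E, i → E = Finset.range E.card) := by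
  induction E using Finset.induction_on_max with
  | empty => simp
  | insert M E hM ih =>
    have hME : M ∉ E := fun h => (hM M h).false
    have hle : E.card ≤ M := by
      rw [← Finset.card_range M]
      exact Finset.card_le_card fun e he => Finset.mem_range.2 (hM e he)
    rw [Finset.card_insert_of_notMem hME, Finset.sum_insert hME, Finset.sum_range_succ]
    refine ⟨by omega, fun h => ?_⟩
    rw [Finset.range_add_one, ← ih.2 (by omega)]
    congr 1
    omega

lemma sum_card_sub_count_compress_lt {x y : α} (hxy : x ≠ y) (F : Finset (Multiset α))
    {m : Multiset α} (hm : y ::ₘ m ∈ F) (hm' : x ::ₘ m ∉ F) :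
    ∑ n ∈ compress hxy F, (n.card - n.count x) < ∑ n ∈ F, (n.card - n.count x) := by
  rw [sum_fiberwise_subst x y (fun m hm => exists_mem_of_mem_compress hxy hm),
    sum_fiberwise_subst x y (F := F) (G := F) (fun m hm => ⟨m, hm, rfl⟩)]
  have split : ∀ (G : Finset (Multiset α)) (u : Multiset α),
      ∑ n ∈ substFiber x y G u, (n.card - n.count x) =
        (substFiber x y G u).card * (u.card - u.count x) +
          ∑ e ∈ (substFiber x y G u).image (Multiset.count y), e := by
    intro G u
    rw [Finset.sum_image (injOn_count_substFiber hxy G u), ← smul_eq_mul, ← Finset.sum_const,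
      ← Finset.sum_add_distrib]
    refine Finset.sum_congr rfl fun n hn => ?_
    obtain ⟨-, rfl⟩ := Finset.mem_filter.1 hn
    have h1 := Multiset.count_le_card x (substMultiset x y n)
    rw [card_substMultiset] at h1 ⊢
    rw [count_substMultiset hxy] at h1 ⊢
    simp only [if_neg hxy, if_true] at h1 ⊢
    omega
  have hcard : ∀ u, ((substFiber x y F u).image (Multiset.count y)).card =
      (substFiber x y F u).card :=
    fun u => Finset.card_image_of_injOn (injOn_count_substFiber hxy F u)
  refine Finset.sum_lt_sum (fun u _ => ?_)
    ⟨substMultiset x y (y ::ₘ m), Finset.mem_image_of_mem _ hm, ?_⟩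
  · rw [split, split, card_substFiber_compress, image_count_substFiber_compress, ← hcard]
    exact Nat.add_le_add_left (sum_range_card_le_sum _).1 _
  · rw [split, split, card_substFiber_compress, image_count_substFiber_compress, ← hcard]
    refine Nat.add_lt_add_left (lt_of_le_of_ne (sum_range_card_le_sum _).1 fun h => hm' ?_) _
    have hE := (sum_range_card_le_sum _).2 h
    have h1 : (y ::ₘ m).count y ∈
        (substFiber x y F (substMultiset x y (y ::ₘ m))).image (Multiset.count y) :=
      Finset.mem_image_of_mem _ (Finset.mem_filter.2 ⟨hm, rfl⟩)
    have h2 : m.count y ∈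
        (substFiber x y F (substMultiset x y (y ::ₘ m))).image (Multiset.count y) := by
      rw [hE, Finset.mem_range] at h1 ⊢
      rw [Multiset.count_cons_self] at h1
      omega
    obtain ⟨n, hn, hnc⟩ := Finset.mem_image.1 h2
    obtain ⟨hnF, hn⟩ := Finset.mem_filter.1 hn
    have : n = x ::ₘ m := by
      refine eq_of_substMultiset_eq hxy ?_ ?_
      · rw [hn, substMultiset_cons, substMultiset_cons]; simp
      · rw [hnc, Multiset.count_cons_of_ne hxy.symm]
    exact this ▸ hnF

lemma exists_isShifted (x : α) (c : ℕ) (F : Finset (Multiset α)) (hF : ∀ m ∈ F, m.card = c) :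
    ∃ G : Finset (Multiset α), G.card = F.card ∧ (∀ m ∈ G, m.card = c) ∧
      (multisetShadow G).card ≤ (multisetShadow F).card ∧ IsShifted x G := by
  induction hn : ∑ n ∈ F, (n.card - n.count x) using Nat.strong_induction_on generalizing F with
  | _ N ih =>
    by_cases h : IsShifted x F
    · exact ⟨F, rfl, hF, le_rfl, h⟩
    · simp only [IsShifted] at h
      push Not at h
      obtain ⟨y, m, hm, hm'⟩ := h
      have hxy : x ≠ y := by rintro rfl; exact hm' hm
      obtain ⟨G, h1, h2, h3, h4⟩ := ih _
        (hn ▸ sum_card_sub_count_compress_lt hxy F hm hm') (compress hxy F) (by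
          intro m hm
          obtain ⟨n, hn, h⟩ := exists_mem_of_mem_compress hxy hm
          rw [← hF n hn, ← card_substMultiset x y m, ← h, card_substMultiset]) rfl
      exact ⟨G, h1.trans (card_compress hxy F), h2,
        h3.trans (card_multisetShadow_compress_le hxy F), h4⟩

lemma IsShifted.shadow {x : α} {F : Finset (Multiset α)} (h : IsShifted x F) :
    IsShifted x (multisetShadow F) := by
  intro y m hm
  obtain ⟨z, hz⟩ := mem_multisetShadow.1 hm
  rw [Multiset.cons_swap] at hz
  have := h _ _ hz
  rw [Multiset.cons_swap] at this
  exact mem_multisetShadow.2 ⟨z, this⟩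

lemma IsShifted.card_eq {x : α} {F : Finset (Multiset α)} (h : IsShifted x F) :
    F.card = (multisetShadow F).card + (F.filter fun m => x ∉ m).card := by
  rw [← Finset.card_filter_add_card_filter_not (s := F) (fun m => x ∈ m)]
  congr 1
  refine (Finset.card_bij' (fun m _ => x ::ₘ m) (fun m _ => m.erase x) ?_ ?_ ?_ ?_).symm
  · intro m hm
    obtain ⟨z, hz⟩ := mem_multisetShadow.1 hm
    exact Finset.mem_filter.2 ⟨h _ _ hz, Multiset.mem_cons_self _ _⟩
  · intro m hm
    obtain ⟨hm, hx⟩ := Finset.mem_filter.1 hm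
    exact mem_multisetShadow.2 ⟨x, by rwa [Multiset.cons_erase hx]⟩
  · intro m _
    exact Multiset.erase_cons_head _ _
  · intro m hm
    exact Multiset.cons_erase (Finset.mem_filter.1 hm).2

lemma card_of_mem_multisetShadow {F : Finset (Multiset α)} {c : ℕ}
    (hF : ∀ m ∈ F, m.card = c + 1) : ∀ m ∈ multisetShadow F, m.card = c := by
  intro m hm
  obtain ⟨z, hz⟩ := mem_multisetShadow.1 hm
  simpa using hF _ hz

lemma multisetShadow_nonempty {F : Finset (Multiset α)} {c : ℕ}
    (hF : ∀ m ∈ F, m.card = c + 1) (h : F.Nonempty) : (multisetShadow F).Nonempty := by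
  obtain ⟨m, hm⟩ := h
  obtain ⟨z, hz⟩ := Multiset.card_pos_iff_exists_mem.1
    ((Nat.succ_pos c).trans_eq (hF m hm).symm)
  obtain ⟨n, rfl⟩ := Multiset.exists_cons_of_mem hz
  exact ⟨n, mem_multisetShadow.2 ⟨z, hm⟩⟩

lemma choose_le_choose_pred_add (n j : ℕ) :
    n.choose (j + 1) ≤ (n - 1).choose (j + 1) + (n - 1).choose j := by
  cases n with
  | zero => simp
  | succ n => rw [Nat.choose_succ_succ]; simp [add_comm]

/-- A Green-type bound for shifted families of multisets, given a bound one degree lower. -/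
lemma IsShifted.card_filter_le_sum_pred {x : α} {k : ℕ} {G : Finset (Multiset α)}
    (hG : IsShifted x G)
    (ih : ∀ a : ℕ → ℕ,
      (multisetShadow G).card ≤ ∑ j ∈ Finset.range k, (a j).choose (j + 1) →
      (G.filter fun m => x ∉ m).card ≤ ∑ j ∈ Finset.range k, (a j).choose (j + 2))
    (a : ℕ → ℕ) (ha : G.card ≤ ∑ j ∈ Finset.range (k + 1), (a j).choose (j + 1)) :
    (G.filter fun m => x ∉ m).card ≤
      ∑ j ∈ Finset.range (k + 1), (a j - 1).choose (j + 1) := by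
  by_contra! hlt
  have h1 := hG.card_eq
  have h2 : ∑ j ∈ Finset.range (k + 1), (a j).choose (j + 1) ≤
      ∑ j ∈ Finset.range (k + 1), (a j - 1).choose (j + 1) +
        ∑ j ∈ Finset.range (k + 1), (a j - 1).choose j := by
    rw [← Finset.sum_add_distrib]
    exact Finset.sum_le_sum fun j _ => choose_le_choose_pred_add _ _
  have h3 : ∑ j ∈ Finset.range (k + 1), (a j - 1).choose j =
      ∑ j ∈ Finset.range k, (a (j + 1) - 1).choose (j + 1) + 1 := by
    rw [Finset.sum_range_succ']; simp
  have h4 := ih (fun j => a (j + 1) - 1) (by omega)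
  have h5 : ∑ j ∈ Finset.range (k + 1), (a j - 1).choose (j + 1) =
      ∑ j ∈ Finset.range k, (a (j + 1) - 1).choose (j + 2) + (a 0 - 1).choose 1 := by
    rw [Finset.sum_range_succ']
  omega

lemma IsShifted.card_filter_le_sum {x : α} (k : ℕ) {F : Finset (Multiset α)}
    (hF : ∀ m ∈ F, m.card = k + 1) (hs : IsShifted x F)
    (ih : ∀ G : Finset (Multiset α), G.card < F.card → (∀ m ∈ G, m.card = k + 1) →
      ∀ a : ℕ → ℕ, (multisetShadow G).card ≤ ∑ j ∈ Finset.range k, (a j).choose (j + 1) →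
        G.card ≤ ∑ j ∈ Finset.range k, (a j + 1).choose (j + 2))
    (ihk : ∀ l, l + 1 = k → ∀ a : ℕ → ℕ, (multisetShadow (multisetShadow F)).card ≤
        ∑ j ∈ Finset.range l, (a j).choose (j + 1) →
      ((multisetShadow F).filter fun m => x ∉ m).card ≤
        ∑ j ∈ Finset.range l, (a j).choose (j + 2))
    (a : ℕ → ℕ) (ha : (multisetShadow F).card ≤ ∑ j ∈ Finset.range k, (a j).choose (j + 1)) :
    (F.filter fun m => x ∉ m).card ≤ ∑ j ∈ Finset.range k, (a j).choose (j + 2) := by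
  rcases F.eq_empty_or_nonempty with rfl | hne
  · simp
  have hpos := Finset.card_pos.2 (multisetShadow_nonempty hF hne)
  cases k with
  | zero => simp at ha; simp [ha] at hpos
  | succ k =>
    have hgreen := hs.shadow.card_filter_le_sum_pred (ihk k rfl) a ha
    have hsub : multisetShadow (F.filter fun m => x ∉ m) ⊆
        (multisetShadow F).filter fun m => x ∉ m := by
      intro n hn
      obtain ⟨z, hz⟩ := mem_multisetShadow.1 hn
      obtain ⟨hz, hx⟩ := Finset.mem_filter.1 hz
      exact Finset.mem_filter.2 ⟨mem_multisetShadow.2 ⟨z, hz⟩,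
        fun h => hx (Multiset.mem_cons_of_mem h)⟩
    have hcard := hs.card_eq
    refine (ih _ (by omega) (fun m hm => hF m (Finset.mem_filter.1 hm).1) (fun j => a j - 1)
      ((Finset.card_le_card hsub).trans hgreen)).trans (Finset.sum_le_sum fun j _ => ?_)
    rcases Nat.eq_zero_or_pos (a j) with h | h
    · simp [h, Nat.choose_eq_zero_of_lt]
    · rw [Nat.sub_add_cancel h]

lemma card_le_and_isShifted_card_filter_le (k : ℕ) (F : Finset (Multiset α))
    (hF : ∀ m ∈ F, m.card = k + 1) (a : ℕ → ℕ)
    (ha : (multisetShadow F).card ≤ ∑ j ∈ Finset.range k, (a j).choose (j + 1)) :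
    F.card ≤ ∑ j ∈ Finset.range k, (a j + 1).choose (j + 2) ∧
      ∀ x, IsShifted x F →
        (F.filter fun m => x ∉ m).card ≤ ∑ j ∈ Finset.range k, (a j).choose (j + 2) := by
  induction k generalizing F a with
  | zero =>
    have : F = ∅ := by
      by_contra hne
      have := Finset.card_pos.2
        (multisetShadow_nonempty hF (Finset.nonempty_iff_ne_empty.2 hne))
      simp at ha
      simp [ha] at this
    subst this
    simp
  | succ k ihk =>
    induction hN : F.card using Nat.strong_induction_on generalizing F a with
    | _ N ih =>
      have main : ∀ G : Finset (Multiset α), G.card = N → (∀ m ∈ G, m.card = k + 2) →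
          ∀ x, IsShifted x G → ∀ b : ℕ → ℕ,
          (multisetShadow G).card ≤ ∑ j ∈ Finset.range (k + 1), (b j).choose (j + 1) →
          (G.filter fun m => x ∉ m).card ≤
            ∑ j ∈ Finset.range (k + 1), (b j).choose (j + 2) := by
        intro G hGN hG x hx b hb
        refine hx.card_filter_le_sum (k + 1) hG
          (fun H hlt hH c hc => (ih _ (hGN ▸ hlt) H hH c hc rfl).1) ?_ b hb
        rintro l hl c hc
        obtain rfl : l = k := by omega
        exact (ihk _ (card_of_mem_multisetShadow hG) c hc).2 x hx.shadow
      refine ⟨?_, fun x hx => main F hN hF x hx a ha⟩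
      rcases F.eq_empty_or_nonempty with rfl | ⟨m, hm⟩
      · simp [← hN]
      obtain ⟨x, hx⟩ := Multiset.card_pos_iff_exists_mem.1
        ((Nat.succ_pos _).trans_eq (hF m hm).symm)
      obtain ⟨G, h1, h2, h3, h4⟩ := exists_isShifted x _ F hF
      have h5 := main G (h1.trans hN) h2 x h4 a (h3.trans ha)
      have h6 := h4.card_eq
      have h7 : ∑ j ∈ Finset.range (k + 1), (a j + 1).choose (j + 2) =
          ∑ j ∈ Finset.range (k + 1), (a j).choose (j + 1) +
            ∑ j ∈ Finset.range (k + 1), (a j).choose (j + 2) := by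
        rw [← Finset.sum_add_distrib]
        exact Finset.sum_congr rfl fun j _ => Nat.choose_succ_succ _ _
      omega

end Shadow

lemma exists_eq_sum_choose_and_macaulay_eq (h a : ℕ) (ha : h = 0 → a = 0) :
    ∃ b : ℕ → ℕ, a = ∑ j ∈ Finset.range h, (b j).choose (j + 1) ∧
      macaulay h a = ∑ j ∈ Finset.range h, (b j + 1).choose (j + 2) := by
  induction h generalizing a with
  | zero => exact ⟨0, by simp [ha rfl], by simp [macaulay]⟩
  | succ h ih =>
    rcases Nat.eq_zero_or_pos a with rfl | hpos
    · exact ⟨0, by simp, by simp [macaulay, Nat.choose_eq_zero_of_lt]⟩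
    rw [macaulay, if_neg hpos.ne']
    set m := Nat.findGreatest (fun k => Nat.choose k (h + 1) ≤ a) (a + h + 1) with hm
    have hle : m.choose (h + 1) ≤ a :=
      Nat.findGreatest_spec (P := fun k => Nat.choose k (h + 1) ≤ a) (Nat.zero_le _) (by simp)
    obtain ⟨b, hb, hb'⟩ := ih (a - m.choose (h + 1)) (by
      rintro rfl
      have : a ≤ m := Nat.le_findGreatest (by omega) (by simp)
      simp
      omega)
    refine ⟨Function.update b h m, ?_, ?_⟩
    · rw [Finset.sum_range_succ, Function.update_self, Finset.sum_congr rfl fun j hj => by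
        rw [Function.update_of_ne (Finset.mem_range.1 hj).ne], ← hb]
      omega
    · rw [Finset.sum_range_succ, Function.update_self, Finset.sum_congr rfl fun j hj => by
        rw [Function.update_of_ne (Finset.mem_range.1 hj).ne], ← hb', add_comm]

open Classical in
/-- The indices in `T` whose vector is not in the span of the vectors of smaller indices in `T`
index a basis of the span. -/
lemma card_filter_notMem_span_lt (K : Type*) {ι κ V : Type*} [Field K] [AddCommGroup V]
    [Module K V] [LinearOrder κ] {key : ι → κ} (hkey : Function.Injective key) (f : ι → V)
    (T : Finset ι) :
    (T.filter fun s => f s ∉ Submodule.span K (f '' {t | t ∈ T ∧ key t < key s})).card =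
      Module.finrank K (Submodule.span K (f '' (T : Set ι))) := by
  suffices h : ∀ S : Finset ι,
      (S = T.filter fun s => f s ∉ Submodule.span K (f '' {t | t ∈ T ∧ key t < key s})) →
      LinearIndepOn K f (S : Set ι) ∧
        Submodule.span K (f '' (S : Set ι)) = Submodule.span K (f '' (T : Set ι)) by
    obtain ⟨h1, h2⟩ := h _ rfl
    rw [← h2, Set.image_eq_range]
    have := finrank_span_eq_card h1
    simpa using this.symm
  induction T using Finset.induction_on_max_value key with
  | empty => rintro S rfl; simp
  | insert a T haT hmax ih =>
    intro S hS
    have hlt : ∀ t ∈ T, key t < key a := fun t ht =>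
      (hmax t ht).lt_of_ne fun h => haT (hkey h ▸ ht)
    obtain ⟨h1, h2⟩ := ih _ rfl
    have e1 : {t | t ∈ insert a T ∧ key t < key a} = (T : Set ι) := by
      ext t
      simp only [Finset.mem_insert, Set.mem_ofPred_eq, Finset.mem_coe]
      constructor
      · rintro ⟨rfl | h, h'⟩
        · exact absurd h' (lt_irrefl _)
        · exact h
      · exact fun h => ⟨Or.inr h, hlt t h⟩
    have e2 : ∀ s ∈ T, {t | t ∈ insert a T ∧ key t < key s} = {t | t ∈ T ∧ key t < key s} := by
      intro s hs
      ext t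
      simp only [Finset.mem_insert, Set.mem_ofPred_eq]
      constructor
      · rintro ⟨rfl | h, h'⟩
        · exact absurd h' (hlt s hs).not_gt
        · exact ⟨h, h'⟩
      · exact fun h => ⟨Or.inr h.1, h.2⟩
    rw [Finset.filter_insert, e1, Finset.filter_congr fun s hs => by rw [e2 s hs]] at hS
    rw [Finset.coe_insert, Set.image_insert_eq]
    by_cases h : f a ∈ Submodule.span K (f '' (T : Set ι))
    · rw [if_neg (not_not.2 h)] at hS
      rw [hS, Submodule.span_insert_eq_span h]
      exact ⟨h1, h2⟩
    · rw [if_pos h] at hS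
      rw [hS, Finset.coe_insert, Set.image_insert_eq, Submodule.span_insert, h2,
        ← Submodule.span_insert, linearIndepOn_insert (by simp [haT]), h2]
      exact ⟨⟨h1, h⟩, rfl⟩

lemma span_range_pow_eq {K R ι : Type*} [Field K] [CommRing R] [Algebra K R] (v : ι → R)
    (i : ℕ) :
    Submodule.span K (Set.range v) ^ i =
      Submodule.span K ((fun s : Multiset ι => (s.map v).prod) '' {s | s.card = i}) := by
  induction i with
  | zero =>
    simp [Submodule.one_eq_span]
  | succ i ih =>
    rw [pow_succ', ih, Submodule.span_mul_span]
    congr 1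
    ext r
    simp only [Set.mem_mul, Set.mem_range, Set.mem_image, Set.mem_ofPred_eq]
    constructor
    · rintro ⟨_, ⟨z, rfl⟩, _, ⟨s, hs, rfl⟩, rfl⟩
      exact ⟨z ::ₘ s, by simp [hs], by simp⟩
    · rintro ⟨s, hs, rfl⟩
      obtain ⟨z, hz⟩ := Multiset.card_pos_iff_exists_mem.1 ((Nat.succ_pos i).trans_eq hs.symm)
      obtain ⟨s, rfl⟩ := Multiset.exists_cons_of_mem hz
      exact ⟨v z, ⟨z, rfl⟩, _, ⟨s, by simpa using hs, rfl⟩, by simp⟩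

/-- The multisets of cardinality `i` on a finite type. -/
def multisetsOfCard (ι : Type*) [Fintype ι] [DecidableEq ι] (i : ℕ) : Finset (Multiset ι) :=
  (Finset.univ : Finset (Sym ι i)).image fun s : Sym ι i => (s : Multiset ι)

lemma mem_multisetsOfCard {ι : Type*} [Fintype ι] [DecidableEq ι] {i : ℕ} {s : Multiset ι} :
    s ∈ multisetsOfCard ι i ↔ s.card = i := by
  simp only [multisetsOfCard, Finset.mem_image, Finset.mem_univ, true_and]
  exact ⟨fun ⟨t, ht⟩ => ht ▸ t.2, fun h => ⟨⟨s, h⟩, rfl⟩⟩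

open Classical in
/-- The standard monomials of degree `i` for generators `v` of an algebra: those which are not
linear combinations of lexicographically smaller monomials of degree `i`. -/
noncomputable def standardMonomials (K : Type*) {R : Type*} [Field K] [CommRing R] [Algebra K R]
    {n : ℕ} (v : Fin n → R) (i : ℕ) : Finset (Multiset (Fin n)) :=
  (multisetsOfCard (Fin n) i).filter fun s => (s.map v).prod ∉
    Submodule.span K ((fun t : Multiset (Fin n) => (t.map v).prod) ''
      {t | t ∈ multisetsOfCard (Fin n) i ∧
        toLex (Multiset.toFinsupp t) < toLex (Multiset.toFinsupp s)})

section StandardMonomials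

variable (K : Type*) {R : Type*} [Field K] [CommRing R] [Algebra K R] {n : ℕ} (v : Fin n → R)

lemma card_standardMonomials (i : ℕ) :
    (standardMonomials K v i).card =
      Module.finrank K ↥(Submodule.span K (Set.range v) ^ i) := by
  have hkey : Function.Injective fun t : Multiset (Fin n) => toLex (Multiset.toFinsupp t) :=
    toLex.injective.comp Multiset.toFinsupp.injective
  rw [standardMonomials, card_filter_notMem_span_lt K hkey
    (fun t : Multiset (Fin n) => (t.map v).prod), span_range_pow_eq]
  have : ((multisetsOfCard (Fin n) i : Finset _) : Set (Multiset (Fin n))) =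
      {s | s.card = i} := by
    ext s; exact mem_multisetsOfCard
  rw [this]

lemma multisetShadow_standardMonomials_subset (i : ℕ) :
    multisetShadow (standardMonomials K v (i + 1)) ⊆ standardMonomials K v i := by
  intro s hs
  obtain ⟨z, hz⟩ := mem_multisetShadow.1 hs
  simp only [standardMonomials, Finset.mem_filter, mem_multisetsOfCard, Multiset.card_cons,
    Nat.add_right_cancel_iff] at hz ⊢
  refine ⟨hz.1, fun h => hz.2 ?_⟩
  have h' := Submodule.mem_map_of_mem (f := LinearMap.mulLeft K (v z)) h
  rw [Submodule.map_span, LinearMap.mulLeft_apply, ← Multiset.prod_cons,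
    ← Multiset.map_cons] at h'
  refine Submodule.span_mono ?_ h'
  rintro _ ⟨_, ⟨t, ⟨ht, hlt⟩, rfl⟩, rfl⟩
  refine ⟨z ::ₘ t, ⟨by simp [ht], ?_⟩, by simp⟩
  rw [← Multiset.singleton_add, ← Multiset.singleton_add, Multiset.toFinsupp.map_add,
    Multiset.toFinsupp.map_add, toLex_add, toLex_add]
  exact add_lt_add_right hlt _

lemma card_of_mem_standardMonomials (i : ℕ) :
    ∀ s ∈ standardMonomials K v i, s.card = i :=
  fun s hs => by
    simp only [standardMonomials, Finset.mem_filter] at hs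
    exact mem_multisetsOfCard.1 hs.1

end StandardMonomials

/-- Macaulay's inequality for Hilbert functions. Let `R = ⊕_{i≥0} R_i` be a standard
graded algebra over a field `K`: a commutative graded `K`-algebra, generated by `R_1`,
with `R_0 = K` and each `R_i` finite-dimensional over `K`. Standardness (including
`R_0 = K·1 = K`) is encoded by `𝒜 i = (𝒜 1)^i` for all `i` (products of submodules;
`(𝒜 1)^0 = 1` is the line `K·1`). If `d_i = dim_K R_i` is the Hilbert function, then
`d_0 = 1`, and `d_{i+1} ≤ d_i^⟨i⟩` for all `i ≥ 1`. -/
theorem stmt2 (K R : Type*) [Field K] [CommRing R] [Nontrivial R] [Algebra K R]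
    (𝒜 : ℕ → Submodule K R) [GradedAlgebra 𝒜]
    (hstd : ∀ i : ℕ, 𝒜 i = 𝒜 1 ^ i)
    (hfin : ∀ i : ℕ, FiniteDimensional K ↥(𝒜 i))
    (d : ℕ → ℕ) (hd : ∀ i : ℕ, d i = Module.finrank K ↥(𝒜 i)) :
    d 0 = 1 ∧ ∀ i : ℕ, 1 ≤ i → d (i + 1) ≤ macaulay i (d i) := by
  refine ⟨?_, fun i hi => ?_⟩
  · rw [hd, hstd 0, pow_zero]
    rw [Submodule.one_eq_span, finrank_span_singleton one_ne_zero]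
  · have := hfin 1
    let b := Module.finBasis K (𝒜 1)
    let v : Fin (Module.finrank K (𝒜 1)) → R := fun j => (b j : R)
    have hv : Submodule.span K (Set.range v) = 𝒜 1 := by
      have h := congrArg (Submodule.map (𝒜 1).subtype) b.span_eq
      rwa [Submodule.map_span, ← Set.range_comp, Submodule.map_subtype_top] at h
    have hcard : ∀ j, (standardMonomials K v j).card = d j := fun j => by
      rw [card_standardMonomials, hv, hd, hstd j]
    obtain ⟨a, ha, ha'⟩ := exists_eq_sum_choose_and_macaulay_eq i (d i) (by omega)
    rw [ha', ← hcard]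
    refine (card_le_and_isShifted_card_filter_le i _
      (card_of_mem_standardMonomials K v (i + 1)) a ?_).1
    rw [← ha, ← hcard]
    exact Finset.card_le_card (multisetShadow_standardMonomials_subset K v i)
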